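/- For Gaussian-mixture training data with component covariance σ₀² I_D, the posterior covariance of the proxy score satisfies, for every x ∈ ℝ^D, Cov_{π_x}( s̃(x; ·) ) = S^{-1} − Σ̃^{-1} + α² Σ̃^{-1} Cov_{w̃}(μ)(x) Σ̃^{-1}, where Σ̃ := α² σ₀² I_D + S, Cov_{π_x}(s̃) := ∫ s̃(x; x₀) s̃(x; x₀)ᵀ π_x(x₀) dx₀ − (∫ s̃(x; x₀) π_x(x₀) dx₀)(∫ s̃(x; x₀) π_x(x₀) dx₀)ᵀ, and Cov_{w̃}(μ)(x) := Σ_m w̃_m(x) μ_m μ_mᵀ − (Σ_m w̃_m(x) μ_m)(Σ_m w̃_m(x) μ_m)ᵀ. -/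

import Mathlib

open Matrix MeasureTheory BigOperators

/-- Multivariate Gaussian density `N(x; m, S)`. -/
noncomputable def gaussDensity {D : ℕ} (S : Matrix (Fin D) (Fin D) ℝ) (m x : Fin D → ℝ) : ℝ :=
  ((2 * Real.pi) ^ D * S.det) ^ (-(1/2) : ℝ) *
    Real.exp (-((x - m) ⬝ᵥ S⁻¹.mulVec (x - m)) / 2)

/-- Gaussian-mixture data density `p₀(x₀) = (1/M) ∑ₘ N(x₀; μₘ, σ₀² I)`. -/
noncomputable def dataDensity {D M : ℕ} (μ : Fin M → Fin D → ℝ) (σ₀ : ℝ)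
    (x₀ : Fin D → ℝ) : ℝ :=
  (M : ℝ)⁻¹ * ∑ m, gaussDensity (σ₀ ^ 2 • (1 : Matrix (Fin D) (Fin D) ℝ)) (μ m) x₀

/-- Transition density `p(x | x₀) = N(x; α x₀, S)`. -/
noncomputable def transDensity {D : ℕ} (α : ℝ) (S : Matrix (Fin D) (Fin D) ℝ)
    (x x₀ : Fin D → ℝ) : ℝ :=
  gaussDensity S (α • x₀) x

/-- Marginal `p(x) = ∫ p(x | x₀) p₀(x₀) dx₀`. -/
noncomputable def margDensity {D M : ℕ} (μ : Fin M → Fin D → ℝ) (σ₀ α : ℝ)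
    (S : Matrix (Fin D) (Fin D) ℝ) (x : Fin D → ℝ) : ℝ :=
  ∫ x₀ : Fin D → ℝ, transDensity α S x x₀ * dataDensity μ σ₀ x₀

/-- Posterior density `π_x(x₀) = p(x | x₀) p₀(x₀) / p(x)`. -/
noncomputable def postDensity {D M : ℕ} (μ : Fin M → Fin D → ℝ) (σ₀ α : ℝ)
    (S : Matrix (Fin D) (Fin D) ℝ) (x x₀ : Fin D → ℝ) : ℝ :=
  transDensity α S x x₀ * dataDensity μ σ₀ x₀ / margDensity μ σ₀ α S x

/-- The proxy score `s̃(x; x₀) = S⁻¹ (α x₀ − x)`. -/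
noncomputable def proxyScore {D : ℕ} (α : ℝ) (S : Matrix (Fin D) (Fin D) ℝ)
    (x x₀ : Fin D → ℝ) : Fin D → ℝ :=
  S⁻¹.mulVec (α • x₀ - x)

/-- Posterior covariance of the proxy score,
`Cov_{π_x}(s̃) = ∫ s̃ s̃ᵀ π_x − (∫ s̃ π_x)(∫ s̃ π_x)ᵀ`. -/
noncomputable def proxyPostCov {D M : ℕ} (μ : Fin M → Fin D → ℝ) (σ₀ α : ℝ)
    (S : Matrix (Fin D) (Fin D) ℝ) (x : Fin D → ℝ) : Matrix (Fin D) (Fin D) ℝ :=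
  Matrix.of fun i j =>
    (∫ x₀ : Fin D → ℝ,
        proxyScore α S x x₀ i * proxyScore α S x x₀ j * postDensity μ σ₀ α S x x₀) -
      (∫ x₀ : Fin D → ℝ, proxyScore α S x x₀ i * postDensity μ σ₀ α S x x₀) *
        (∫ x₀ : Fin D → ℝ, proxyScore α S x x₀ j * postDensity μ σ₀ α S x x₀)

/-- Posterior weights `w̃ₘ(x) = N(x; α μₘ, Σ̃) / ∑ₘ' N(x; α μₘ', Σ̃)`. -/
noncomputable def mixW {D M : ℕ} (μ : Fin M → Fin D → ℝ) (α : ℝ)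
    (Sig : Matrix (Fin D) (Fin D) ℝ) (m : Fin M) (x : Fin D → ℝ) : ℝ :=
  gaussDensity Sig (α • μ m) x / ∑ m', gaussDensity Sig (α • μ m') x

/-- Posterior mean of the mixture centers, `∑ₘ w̃ₘ(x) μₘ`. -/
noncomputable def mixMean {D M : ℕ} (μ : Fin M → Fin D → ℝ) (α : ℝ)
    (Sig : Matrix (Fin D) (Fin D) ℝ) (x : Fin D → ℝ) : Fin D → ℝ :=
  ∑ m, mixW μ α Sig m x • μ m

/-- Posterior covariance of the mixture centers,
`Cov_w̃(μ)(x) = ∑ₘ w̃ₘ(x) μₘ μₘᵀ − μ̄(x) μ̄(x)ᵀ`. -/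
noncomputable def mixCovMu {D M : ℕ} (μ : Fin M → Fin D → ℝ) (α : ℝ)
    (Sig : Matrix (Fin D) (Fin D) ℝ) (x : Fin D → ℝ) : Matrix (Fin D) (Fin D) ℝ :=
  (∑ m, mixW μ α Sig m x • vecMulVec (μ m) (μ m)) -
    vecMulVec (mixMean μ α Sig x) (mixMean μ α Sig x)


lemma g1_int0 : Integrable (fun t : ℝ => Real.exp (-(t * t) / 2)) := by
  have := integrable_exp_neg_mul_sq (b := 1 / 2) (by norm_num)
  refine this.congr (Filter.Eventually.of_forall fun t => ?_)
  dsimp only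
  congr 1; ring

lemma g1_int1 : Integrable (fun t : ℝ => t * Real.exp (-(t * t) / 2)) := by
  have := integrable_rpow_mul_exp_neg_mul_sq (b := 1 / 2) (by norm_num) (s := 1) (by norm_num)
  refine this.congr (Filter.Eventually.of_forall fun t => ?_)
  dsimp only
  rw [Real.rpow_one]
  congr 2; ring

lemma g1_int2 : Integrable (fun t : ℝ => t * t * Real.exp (-(t * t) / 2)) := by
  have := integrable_rpow_mul_exp_neg_mul_sq (b := 1 / 2) (by norm_num) (s := 2) (by norm_num)
  refine this.congr (Filter.Eventually.of_forall fun t => ?_)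
  dsimp only
  rw [Real.rpow_two, sq]
  congr 2; ring

lemma g1_mom1 : ∫ t : ℝ, t * Real.exp (-(t * t) / 2) = 0 := by
  have h := integral_neg_eq_self (fun t : ℝ => t * Real.exp (-(t * t) / 2)) volume
  simp only [neg_mul_neg] at h
  simp only [neg_mul (_ : ℝ) (Real.exp _)] at h
  rw [integral_neg] at h
  linarith

lemma g1_mom2 : ∫ t : ℝ, t * t * Real.exp (-(t * t) / 2) = ∫ t : ℝ, Real.exp (-(t * t) / 2) := by
  have h := integral_mul_deriv_eq_deriv_mul_of_integrable (u := fun t : ℝ => t)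
    (u' := fun _ => (1 : ℝ)) (v := fun t : ℝ => -Real.exp (-(t * t) / 2))
    (v' := fun t : ℝ => t * Real.exp (-(t * t) / 2))
    (fun t _ => hasDerivAt_id t)
    (fun t _ => by
      have h1 : HasDerivAt (fun t : ℝ => -(t * t) / 2) (-t) t := by
        have := (((hasDerivAt_id t).mul (hasDerivAt_id t)).neg).div_const 2
        have e : -(1 * id t + id t * 1) / 2 = -t := by simp only [id]; ring
        rw [e] at this
        exact this
      have h2 := h1.exp.neg
      have e : -(Real.exp (-(t * t) / 2) * -t) = t * Real.exp (-(t * t) / 2) := by ring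
      rw [e] at h2
      exact h2)
    (g1_int2.congr (Filter.Eventually.of_forall fun t => by simp [mul_assoc]))
    (g1_int0.neg.congr (Filter.Eventually.of_forall fun t => by simp))
    (g1_int1.neg.congr (Filter.Eventually.of_forall fun t => by simp))
  simp only [one_mul, integral_neg, neg_neg, ← mul_assoc] at h
  exact h

lemma g1_pos : 0 < ∫ t : ℝ, Real.exp (-(t * t) / 2) := integral_exp_pos g1_int0

/-- one-dimensional factor -/
noncomputable def fac {D : ℕ} (a b : Fin D → Prop) [DecidablePred a] [DecidablePred b]
    (r : Fin D) (t : ℝ) : ℝ :=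
  (if a r then t else 1) * (if b r then t else 1) * Real.exp (-(t * t) / 2)

lemma fac_int {D : ℕ} (a b : Fin D → Prop) [DecidablePred a] [DecidablePred b] (r : Fin D) :
    Integrable (fac a b r) := by
  unfold fac
  by_cases ha : a r <;> by_cases hb : b r <;> simp only [ha, hb, if_true, if_false, one_mul, mul_one]
  · exact g1_int2
  · exact g1_int1
  · exact g1_int1
  · exact g1_int0

lemma exp_dot {D : ℕ} (z : Fin D → ℝ) :
    Real.exp (-(z ⬝ᵥ z) / 2) = ∏ r, Real.exp (-(z r * z r) / 2) := by
  rw [← Real.exp_sum]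
  congr 1
  rw [dotProduct, ← Finset.sum_neg_distrib, Finset.sum_div]

lemma gD_int0 {D : ℕ} : Integrable (fun z : Fin D → ℝ => Real.exp (-(z ⬝ᵥ z) / 2)) := by
  have h := Integrable.fintype_prod (f := fun (_ : Fin D) (t : ℝ) => Real.exp (-(t * t) / 2))
    (μ := fun _ => volume) (fun _ => g1_int0)
  rw [← volume_pi] at h
  simpa only [exp_dot] using h

lemma gD_eq1 {D : ℕ} (k : Fin D) (z : Fin D → ℝ) : z k * Real.exp (-(z ⬝ᵥ z) / 2) =
    ∏ r, fac (fun r => r = k) (fun _ => False) r (z r) := by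
  simp only [fac, Finset.prod_mul_distrib, exp_dot, Finset.prod_ite_eq', Finset.mem_univ, if_true,
    if_false, Finset.prod_const_one, mul_one]

lemma gD_eq2 {D : ℕ} (k l : Fin D) (z : Fin D → ℝ) : z k * z l * Real.exp (-(z ⬝ᵥ z) / 2) =
    ∏ r, fac (fun r => r = k) (fun r => r = l) r (z r) := by
  simp only [fac, Finset.prod_mul_distrib, exp_dot, Finset.prod_ite_eq', Finset.mem_univ, if_true,
    if_false, Finset.prod_const_one, mul_one]

lemma gD_int1 {D : ℕ} (k : Fin D) :
    Integrable (fun z : Fin D → ℝ => z k * Real.exp (-(z ⬝ᵥ z) / 2)) := by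
  have h := Integrable.fintype_prod (f := fac (fun r => r = k) (fun _ => False))
    (μ := fun _ => volume) (fun _ => fac_int _ _ _)
  rw [← volume_pi] at h
  simpa only [gD_eq1] using h

lemma gD_int2 {D : ℕ} (k l : Fin D) :
    Integrable (fun z : Fin D → ℝ => z k * z l * Real.exp (-(z ⬝ᵥ z) / 2)) := by
  have h := Integrable.fintype_prod (f := fac (fun r => r = k) (fun r => r = l))
    (μ := fun _ => volume) (fun _ => fac_int _ _ _)
  rw [← volume_pi] at h
  simpa only [gD_eq2] using h

lemma gD_mom1 {D : ℕ} (k : Fin D) :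
    ∫ z : Fin D → ℝ, z k * Real.exp (-(z ⬝ᵥ z) / 2) = 0 := by
  simp only [gD_eq1]
  rw [integral_fintype_prod_volume_eq_prod]
  apply Finset.prod_eq_zero (Finset.mem_univ k)
  simp [fac, g1_mom1]

lemma gD_mom2 {D : ℕ} (k l : Fin D) :
    ∫ z : Fin D → ℝ, z k * z l * Real.exp (-(z ⬝ᵥ z) / 2) =
      (if k = l then 1 else 0) * ∫ z : Fin D → ℝ, Real.exp (-(z ⬝ᵥ z) / 2) := by
  simp only [gD_eq2]
  rw [integral_fintype_prod_volume_eq_prod]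
  split_ifs with h
  · subst h
    simp only [exp_dot]
    rw [integral_fintype_prod_volume_eq_prod (fun _ t => Real.exp (-(t * t) / 2)), one_mul]
    apply Finset.prod_congr rfl
    intro r _
    by_cases hr : r = k
    · simp [fac, hr, g1_mom2]
    · simp [fac, hr]
  · rw [zero_mul]
    apply Finset.prod_eq_zero (Finset.mem_univ k)
    simp [fac, h, g1_mom1]

lemma gD_pos {D : ℕ} : 0 < ∫ z : Fin D → ℝ, Real.exp (-(z ⬝ᵥ z) / 2) := integral_exp_pos gD_int0

lemma gD_expand {D : ℕ} (c d : ℝ) (u v z : Fin D → ℝ) :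
    (c + u ⬝ᵥ z) * (d + v ⬝ᵥ z) * Real.exp (-(z ⬝ᵥ z) / 2) =
      c * d * Real.exp (-(z ⬝ᵥ z) / 2)
      + ∑ k, (c * v k + d * u k) * (z k * Real.exp (-(z ⬝ᵥ z) / 2))
      + ∑ k, ∑ l, (u k * v l) * (z k * z l * Real.exp (-(z ⬝ᵥ z) / 2)) := by
  generalize Real.exp (-(z ⬝ᵥ z) / 2) = e
  have h1 : ∑ k, (c * v k + d * u k) * (z k * e) = (c * (v ⬝ᵥ z) + d * (u ⬝ᵥ z)) * e := by
    simp only [dotProduct, Finset.mul_sum, Finset.sum_mul, ← Finset.sum_add_distrib]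
    exact Finset.sum_congr rfl fun k _ => by ring
  have h2 : ∑ k, ∑ l, (u k * v l) * (z k * z l * e) = (u ⬝ᵥ z) * (v ⬝ᵥ z) * e := by
    simp only [dotProduct]
    rw [Finset.sum_mul_sum]
    simp only [Finset.sum_mul]
    exact Finset.sum_congr rfl fun k _ => Finset.sum_congr rfl fun l _ => by ring
  rw [h1, h2]; ring

lemma gD_main {D : ℕ} (c d : ℝ) (u v : Fin D → ℝ) :
    Integrable (fun z : Fin D → ℝ => (c + u ⬝ᵥ z) * (d + v ⬝ᵥ z) * Real.exp (-(z ⬝ᵥ z) / 2)) ∧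
    ∫ z : Fin D → ℝ, (c + u ⬝ᵥ z) * (d + v ⬝ᵥ z) * Real.exp (-(z ⬝ᵥ z) / 2) =
      (c * d + u ⬝ᵥ v) * ∫ z : Fin D → ℝ, Real.exp (-(z ⬝ᵥ z) / 2) := by
  have i0 : Integrable (fun z : Fin D → ℝ => c * d * Real.exp (-(z ⬝ᵥ z) / 2)) :=
    gD_int0.const_mul _
  have i1 : ∀ k ∈ Finset.univ, Integrable (fun z : Fin D → ℝ =>
      (c * v k + d * u k) * (z k * Real.exp (-(z ⬝ᵥ z) / 2))) :=
    fun k _ => (gD_int1 k).const_mul _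
  have i2 : ∀ k, ∀ l ∈ Finset.univ, Integrable (fun z : Fin D → ℝ =>
      (u k * v l) * (z k * z l * Real.exp (-(z ⬝ᵥ z) / 2))) :=
    fun k l _ => (gD_int2 k l).const_mul _
  have j1 := integrable_finsetSum _ i1
  have j2 := fun k (_ : k ∈ Finset.univ) => integrable_finsetSum _ (i2 k)
  have j3 := integrable_finsetSum _ j2
  simp only [gD_expand]
  refine ⟨(i0.add j1).add j3, ?_⟩
  have j01 : Integrable (fun z : Fin D → ℝ => c * d * Real.exp (-(z ⬝ᵥ z) / 2)
      + ∑ k, (c * v k + d * u k) * (z k * Real.exp (-(z ⬝ᵥ z) / 2))) := i0.add j1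
  rw [integral_add j01 j3, integral_add i0 j1, integral_finsetSum _ i1,
    integral_finsetSum _ j2, integral_const_mul]
  have : ∀ k, ∫ z : Fin D → ℝ, ∑ l, (u k * v l) * (z k * z l * Real.exp (-(z ⬝ᵥ z) / 2)) =
      u k * v k * ∫ z : Fin D → ℝ, Real.exp (-(z ⬝ᵥ z) / 2) := by
    intro k
    rw [integral_finsetSum _ (i2 k)]
    simp only [integral_const_mul, gD_mom2]
    simp
  simp only [this, integral_const_mul, gD_mom1]
  simp [dotProduct, Finset.sum_mul, add_mul]

lemma gP_main {D : ℕ} (P : Matrix (Fin D) (Fin D) ℝ) (hP : P.PosDef) :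
    ∃ G : ℝ, 0 < G ∧ ∀ (c d : ℝ) (u v b : Fin D → ℝ),
    Integrable (fun y : Fin D → ℝ => (c + u ⬝ᵥ (y - b)) * (d + v ⬝ᵥ (y - b)) *
      Real.exp (-((y - b) ⬝ᵥ P *ᵥ (y - b)) / 2)) ∧
    ∫ y : Fin D → ℝ, (c + u ⬝ᵥ (y - b)) * (d + v ⬝ᵥ (y - b)) *
      Real.exp (-((y - b) ⬝ᵥ P *ᵥ (y - b)) / 2) =
      (c * d + u ⬝ᵥ P⁻¹ *ᵥ v) * G := by
  obtain ⟨B, hB⟩ : ∃ B : Matrix (Fin D) (Fin D) ℝ, P = Bᵀ * B := by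
    open scoped MatrixOrder Matrix.Norms.L2Operator in
    obtain ⟨B, hB⟩ := CStarAlgebra.nonneg_iff_eq_star_mul_self.mp hP.posSemidef.nonneg
    exact ⟨B, by simpa [star_eq_conjTranspose] using hB⟩
  have hdet : B.det ≠ 0 := by
    intro h
    have := hP.det_pos
    rw [hB, det_mul, h] at this
    simp at this
  have hu : IsUnit B.det := isUnit_iff_ne_zero.mpr hdet
  have hmap := Real.map_matrix_volume_pi_eq_smul_volume_pi hdet
  have hcont : Continuous (toLin' B) := (toLin' B).continuous_of_finiteDimensional
  refine ⟨|B.det⁻¹| * ∫ z : Fin D → ℝ, Real.exp (-(z ⬝ᵥ z) / 2),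
    mul_pos (by positivity) gD_pos, ?_⟩
  intro c d u v b
  let H : (Fin D → ℝ) → ℝ := fun z => (c + (B⁻¹ᵀ *ᵥ u) ⬝ᵥ z) * (d + (B⁻¹ᵀ *ᵥ v) ⬝ᵥ z) *
    Real.exp (-(z ⬝ᵥ z) / 2)
  have hH : Integrable H := (gD_main _ _ _ _).1
  have hd : ∀ (w y : Fin D → ℝ), (B⁻¹ᵀ *ᵥ w) ⬝ᵥ (B *ᵥ y) = w ⬝ᵥ y := by
    intro w y
    rw [mulVec_transpose, ← dotProduct_mulVec, mulVec_mulVec, nonsing_inv_mul _ hu, one_mulVec]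
  have hq : ∀ y : Fin D → ℝ, (B *ᵥ y) ⬝ᵥ (B *ᵥ y) = y ⬝ᵥ P *ᵥ y := by
    intro y
    rw [hB, ← mulVec_mulVec, dotProduct_mulVec y, vecMul_transpose]
  have hfun : ∀ y : Fin D → ℝ, (c + u ⬝ᵥ y) * (d + v ⬝ᵥ y) *
      Real.exp (-(y ⬝ᵥ P *ᵥ y) / 2) = H (toLin' B y) := by
    intro y
    simp only [H, toLin'_apply, hd, hq]
  have hHm : Integrable H (Measure.map (toLin' B) volume) := by
    rw [hmap]; exact hH.smul_measure ENNReal.ofReal_ne_top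
  have hI : Integrable (fun y => H (toLin' B y)) :=
    (integrable_map_measure hHm.aestronglyMeasurable hcont.aemeasurable).mp hHm
  simp only [hfun]
  refine ⟨hI.comp_sub_right b, ?_⟩
  rw [integral_sub_right_eq_self (fun y => H (toLin' B y)) b,
    ← integral_map hcont.aemeasurable hHm.aestronglyMeasurable, hmap, integral_smul_measure,
    (gD_main _ _ _ _).2, ENNReal.toReal_ofReal (abs_nonneg _)]
  have : (B⁻¹ᵀ *ᵥ u) ⬝ᵥ (B⁻¹ᵀ *ᵥ v) = u ⬝ᵥ P⁻¹ *ᵥ v := by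
    rw [hB, Matrix.mul_inv_rev, ← mulVec_mulVec, ← transpose_nonsing_inv, mulVec_transpose,
      ← dotProduct_mulVec]
  rw [this, smul_eq_mul]; ring

lemma inv_scalar {D : ℕ} {s : ℝ} (hs : s ≠ 0) :
    (s • (1 : Matrix (Fin D) (Fin D) ℝ))⁻¹ = s⁻¹ • 1 := by
  apply inv_eq_right_inv
  rw [smul_mul_smul_comm, mul_one, mul_inv_cancel₀ hs, one_smul]

lemma K_identity {D : ℕ} {α s : ℝ} (hs : s ≠ 0) {S Sig P : Matrix (Fin D) (Fin D) ℝ}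
    (hS : IsUnit S.det) (hSu : IsUnit Sig.det)
    (hSig : Sig = (α ^ 2 * s) • (1 : Matrix (Fin D) (Fin D) ℝ) + S)
    (hP : P = α ^ 2 • S⁻¹ + s⁻¹ • 1) :
    α ^ 2 • (S⁻¹ * P⁻¹ * S⁻¹) = S⁻¹ - Sig⁻¹ := by
  have h1 : P = s⁻¹ • (S⁻¹ * Sig) := by
    rw [hP, hSig, mul_add, nonsing_inv_mul _ hS, mul_smul_comm, mul_one, smul_add, smul_smul]
    congr 2
    field_simp
  have h2 : P⁻¹ = s • (Sig⁻¹ * S) := by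
    apply inv_eq_right_inv
    rw [h1, smul_mul_smul_comm, inv_mul_cancel₀ hs, one_smul, mul_assoc, ← mul_assoc Sig,
      mul_nonsing_inv _ hSu, one_mul, nonsing_inv_mul _ hS]
  have h3 : (α ^ 2 * s) • (1 : Matrix (Fin D) (Fin D) ℝ) = Sig - S := by rw [hSig]; simp
  calc α ^ 2 • (S⁻¹ * P⁻¹ * S⁻¹) = S⁻¹ * ((α ^ 2 * s) • 1) * Sig⁻¹ := by
        rw [h2]
        simp only [mul_smul_comm, smul_mul_assoc, smul_smul, mul_one]
        rw [mul_assoc, mul_assoc Sig⁻¹, mul_nonsing_inv _ hS, mul_one]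
    _ = S⁻¹ - Sig⁻¹ := by
        rw [h3, mul_sub, sub_mul, mul_assoc, mul_nonsing_inv _ hSu, nonsing_inv_mul _ hS, mul_one,
          one_mul]

lemma symm_dot {D : ℕ} {A : Matrix (Fin D) (Fin D) ℝ} (hA : Aᵀ = A) (u v : Fin D → ℝ) :
    u ⬝ᵥ A *ᵥ v = v ⬝ᵥ A *ᵥ u := by
  rw [dotProduct_mulVec, ← mulVec_transpose, hA, dotProduct_comm]

lemma complete_square {D : ℕ} {α s : ℝ} {T Sigi P : Matrix (Fin D) (Fin D) ℝ}
    (hTs : Tᵀ = T) (hPs : Pᵀ = P) (hPu : IsUnit P.det)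
    (hP : P = α ^ 2 • T + s⁻¹ • 1)
    (hK : α ^ 2 • (T * P⁻¹ * T) = T - Sigi) (r t : Fin D → ℝ) :
    (r - α • t) ⬝ᵥ T *ᵥ (r - α • t) + t ⬝ᵥ (s⁻¹ • (1 : Matrix (Fin D) (Fin D) ℝ)) *ᵥ t =
      (t - α • (P⁻¹ * T) *ᵥ r) ⬝ᵥ P *ᵥ (t - α • (P⁻¹ * T) *ᵥ r) + r ⬝ᵥ Sigi *ᵥ r := by
  set h := α • (P⁻¹ * T) *ᵥ r with hh
  have e1 : P *ᵥ h = α • T *ᵥ r := by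
    rw [hh, mulVec_smul, mulVec_mulVec, ← mul_assoc, mul_nonsing_inv _ hPu, one_mul]
  have e2 : r ⬝ᵥ Sigi *ᵥ r = r ⬝ᵥ T *ᵥ r - α * (h ⬝ᵥ T *ᵥ r) := by
    have : Sigi = T - α ^ 2 • (T * P⁻¹ * T) := by rw [hK]; simp
    rw [this, sub_mulVec, dotProduct_sub, symm_dot hTs h r, hh, mulVec_smul, mulVec_mulVec,
      smul_mulVec, dotProduct_smul, dotProduct_smul, ← mul_assoc]
    simp only [smul_eq_mul]; ring
  have e3 : t ⬝ᵥ P *ᵥ t = α ^ 2 * (t ⬝ᵥ T *ᵥ t) + s⁻¹ * (t ⬝ᵥ t) := by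
    rw [hP, add_mulVec, dotProduct_add, smul_mulVec, smul_mulVec, one_mulVec, dotProduct_smul,
      dotProduct_smul]; simp
  rw [e2, mulVec_sub, mulVec_sub, sub_dotProduct, dotProduct_sub, dotProduct_sub, sub_dotProduct,
    dotProduct_sub, dotProduct_sub, symm_dot hPs h t, e1, e3]
  simp only [mulVec_smul, dotProduct_smul, smul_dotProduct, smul_eq_mul, smul_mulVec, one_mulVec]
  rw [symm_dot hTs r t]
  ring

/-- Master integral identity. -/
lemma master {D M : ℕ} (hM : 1 ≤ M)
    (μ : Fin M → Fin D → ℝ) (α σ₀ : ℝ) (hα : 0 < α) (hσ₀ : 0 < σ₀)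
    (S : Matrix (Fin D) (Fin D) ℝ) (hS : S.PosDef)
    (Sig : Matrix (Fin D) (Fin D) ℝ)
    (hSig : Sig = (α ^ 2 * σ₀ ^ 2) • (1 : Matrix (Fin D) (Fin D) ℝ) + S) (x : Fin D → ℝ) :
    ∃ κ : ℝ, 0 < κ ∧ ∀ (c d : ℝ) (u v : Fin D → ℝ),
      ∫ y : Fin D → ℝ, (c + u ⬝ᵥ proxyScore α S x y) * (d + v ⬝ᵥ proxyScore α S x y) *
        (transDensity α S x y * dataDensity μ σ₀ y) =
      κ * ∑ m, gaussDensity Sig (α • μ m) x *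
        ((c + u ⬝ᵥ Sig⁻¹ *ᵥ (α • μ m - x)) * (d + v ⬝ᵥ Sig⁻¹ *ᵥ (α • μ m - x))
          + u ⬝ᵥ (S⁻¹ - Sig⁻¹) *ᵥ v) := by
  have hs : σ₀ ^ 2 ≠ 0 := by positivity
  have hSu : IsUnit S.det := isUnit_iff_ne_zero.mpr hS.det_pos.ne'
  have hone : (1 : Matrix (Fin D) (Fin D) ℝ).PosDef := PosDef.one
  have hSigP : Sig.PosDef := by
    rw [hSig]; exact (hone.smul (by positivity)).add hS
  have hSigu : IsUnit Sig.det := isUnit_iff_ne_zero.mpr hSigP.det_pos.ne'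
  obtain ⟨P, hP⟩ : ∃ P : Matrix (Fin D) (Fin D) ℝ, P = α ^ 2 • S⁻¹ + (σ₀ ^ 2)⁻¹ • 1 := ⟨_, rfl⟩
  have hPP : P.PosDef := by
    rw [hP]; exact (hS.inv.smul (by positivity)).add (hone.smul (by positivity))
  have hPu : IsUnit P.det := isUnit_iff_ne_zero.mpr hPP.det_pos.ne'
  have hTs : S⁻¹ᵀ = S⁻¹ := by simpa using hS.inv.isHermitian.eq
  have hPs : Pᵀ = P := by simpa using hPP.isHermitian.eq
  have hK := K_identity hs hSu hSigu hSig hP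
  obtain ⟨G, hG, hGm⟩ := gP_main P hPP
  set C1 : ℝ := ((2 * Real.pi) ^ D * S.det) ^ (-(1/2) : ℝ) with hC1
  set C2 : ℝ := ((2 * Real.pi) ^ D * (σ₀ ^ 2 • (1 : Matrix (Fin D) (Fin D) ℝ)).det) ^ (-(1/2) : ℝ)
    with hC2
  set C3 : ℝ := ((2 * Real.pi) ^ D * Sig.det) ^ (-(1/2) : ℝ) with hC3
  have h1 : 0 < C1 := Real.rpow_pos_of_pos (mul_pos (by positivity) hS.det_pos) _
  have h2 : 0 < C2 := Real.rpow_pos_of_pos (mul_pos (by positivity)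
    (hone.smul (by positivity : 0 < σ₀ ^ 2)).det_pos) _
  have h3 : 0 < C3 := Real.rpow_pos_of_pos (mul_pos (by positivity) hSigP.det_pos) _
  have hMp : 0 < (M : ℝ) := by exact_mod_cast hM
  refine ⟨(M : ℝ)⁻¹ * C1 * C2 * C3⁻¹ * G, by positivity, ?_⟩
  intro c d u v
  let b : Fin M → Fin D → ℝ := fun m => μ m + α • (P⁻¹ * S⁻¹) *ᵥ (x - α • μ m)
  -- affine form of the score
  have hscore : ∀ m (w y : Fin D → ℝ), w ⬝ᵥ proxyScore α S x y =
      w ⬝ᵥ Sig⁻¹ *ᵥ (α • μ m - x) + (α • S⁻¹ *ᵥ w) ⬝ᵥ (y - b m) := by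
    intro m w y
    have e : Sig⁻¹ = S⁻¹ - α ^ 2 • (S⁻¹ * P⁻¹ * S⁻¹) := by rw [hK]; simp
    have e0 : (α • S⁻¹ *ᵥ w) ⬝ᵥ (y - b m) = w ⬝ᵥ (α • S⁻¹ *ᵥ (y - b m)) := by
      rw [smul_dotProduct, dotProduct_smul, dotProduct_comm, symm_dot hTs]
    rw [e0, ← dotProduct_add]
    congr 1
    have e1 : x - α • μ m = -(α • μ m - x) := by simp
    simp only [b, proxyScore]
    rw [e, e1]
    have e2 : α • y - x = (α • μ m - x) + α • (y - μ m) := by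
      rw [smul_sub]; abel
    rw [e2]
    generalize α • μ m - x = r
    rw [← sub_sub]
    simp only [mulVec_sub, mulVec_add, mulVec_smul, mulVec_neg, sub_mulVec, smul_mulVec,
      mulVec_mulVec, smul_sub, smul_neg, smul_smul, mul_assoc, sq]
    abel
  have hdens : ∀ m (y : Fin D → ℝ), transDensity α S x y *
      gaussDensity (σ₀ ^ 2 • (1 : Matrix (Fin D) (Fin D) ℝ)) (μ m) y =
      (C1 * C2 * C3⁻¹ * gaussDensity Sig (α • μ m) x) *
        Real.exp (-((y - b m) ⬝ᵥ P *ᵥ (y - b m)) / 2) := by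
    intro m y
    have hq := complete_square hTs hPs hPu hP hK (x - α • μ m) (y - μ m)
    have e1 : x - α • μ m - α • (y - μ m) = x - α • y := by rw [smul_sub]; abel
    have e2 : y - μ m - α • (P⁻¹ * S⁻¹) *ᵥ (x - α • μ m) = y - b m := by
      simp only [b]; abel
    rw [e1, e2] at hq
    unfold transDensity gaussDensity
    rw [inv_scalar hs, ← hC1, ← hC2, ← hC3]
    have e3 : C1 * C2 * C3⁻¹ * (C3 * Real.exp (-((x - α • μ m) ⬝ᵥ Sig⁻¹ *ᵥ (x - α • μ m)) / 2)) *
        Real.exp (-((y - b m) ⬝ᵥ P *ᵥ (y - b m)) / 2) = C1 * C2 *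
        (Real.exp (-((x - α • μ m) ⬝ᵥ Sig⁻¹ *ᵥ (x - α • μ m)) / 2) *
        Real.exp (-((y - b m) ⬝ᵥ P *ᵥ (y - b m)) / 2)) := by
      field_simp
    rw [e3, mul_mul_mul_comm, ← Real.exp_add, ← Real.exp_add]
    congr 2
    linarith
  have hfun : ∀ y : Fin D → ℝ,
      (c + u ⬝ᵥ proxyScore α S x y) * (d + v ⬝ᵥ proxyScore α S x y) *
        (transDensity α S x y * dataDensity μ σ₀ y) =
      ∑ m, ((M : ℝ)⁻¹ * (C1 * C2 * C3⁻¹ * gaussDensity Sig (α • μ m) x)) *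
        (((c + u ⬝ᵥ Sig⁻¹ *ᵥ (α • μ m - x)) + (α • S⁻¹ *ᵥ u) ⬝ᵥ (y - b m)) *
         ((d + v ⬝ᵥ Sig⁻¹ *ᵥ (α • μ m - x)) + (α • S⁻¹ *ᵥ v) ⬝ᵥ (y - b m)) *
          Real.exp (-((y - b m) ⬝ᵥ P *ᵥ (y - b m)) / 2)) := by
    intro y
    unfold dataDensity
    rw [mul_left_comm (transDensity α S x y), Finset.mul_sum, Finset.mul_sum, Finset.mul_sum]
    refine Finset.sum_congr rfl fun m _ => ?_
    rw [hdens m y, hscore m u y, hscore m v y]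
    ring
  simp only [hfun]
  rw [integral_finsetSum _ (fun m _ => (hGm _ _ _ _ _).1.const_mul _), Finset.mul_sum]
  refine Finset.sum_congr rfl fun m _ => ?_
  rw [integral_const_mul, (hGm _ _ _ _ _).2]
  have e : (α • S⁻¹ *ᵥ u) ⬝ᵥ P⁻¹ *ᵥ (α • S⁻¹ *ᵥ v) = u ⬝ᵥ (S⁻¹ - Sig⁻¹) *ᵥ v := by
    rw [← hK, smul_mulVec, ← mulVec_mulVec, ← mulVec_mulVec, smul_dotProduct, mulVec_smul,
      dotProduct_smul, dotProduct_smul, dotProduct_comm, symm_dot hTs, smul_smul, sq]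
  rw [e]
  ring

/-- for Gaussian-mixture training data with component covariance `σ₀² I`,
with `Σ̃ := α² σ₀² I + S`, the posterior covariance of the proxy score satisfies
`Cov_{π_x}(s̃) = S⁻¹ − Σ̃⁻¹ + α² Σ̃⁻¹ Cov_w̃(μ)(x) Σ̃⁻¹`. -/
theorem proxy_post_cov_gaussian_mixture {D M : ℕ} (hD : 1 ≤ D) (hM : 1 ≤ M)
    (μ : Fin M → Fin D → ℝ) (α σ₀ : ℝ) (hα : 0 < α) (hσ₀ : 0 < σ₀)
    (S : Matrix (Fin D) (Fin D) ℝ) (hS : S.PosDef)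
    (Sig : Matrix (Fin D) (Fin D) ℝ)
    (hSig : Sig = (α ^ 2 * σ₀ ^ 2) • (1 : Matrix (Fin D) (Fin D) ℝ) + S) :
    ∀ (x : Fin D → ℝ) (i j : Fin D),
      proxyPostCov μ σ₀ α S x i j =
        S⁻¹ i j - Sig⁻¹ i j + (α ^ 2 • (Sig⁻¹ * mixCovMu μ α Sig x * Sig⁻¹)) i j := by
  intro x i j
  obtain ⟨κ, hκ, hm⟩ := master hM μ α σ₀ hα hσ₀ S hS Sig hSig x
  set g : Fin M → ℝ := fun m => gaussDensity Sig (α • μ m) x with hg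
  set a : Fin M → Fin D → ℝ := fun m => Sig⁻¹ *ᵥ (α • μ m - x) with ha
  have hSigP : Sig.PosDef := by
    rw [hSig]; exact (PosDef.one.smul (by positivity)).add hS
  have hsym : Sig⁻¹ᵀ = Sig⁻¹ := by simpa using hSigP.inv.isHermitian.eq
  have hgpos : ∀ m, 0 < g m := fun m => mul_pos
    (Real.rpow_pos_of_pos (mul_pos (by positivity) hSigP.det_pos) _) (Real.exp_pos _)
  have : Nonempty (Fin M) := ⟨⟨0, hM⟩⟩
  have hGs : 0 < ∑ m, g m := Finset.sum_pos (fun m _ => hgpos m) Finset.univ_nonempty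
  have hmarg : margDensity μ σ₀ α S x = κ * ∑ m, g m := by
    have := hm 1 1 0 0
    simpa [margDensity] using this
  have hfirst : ∀ k, ∫ y : Fin D → ℝ, proxyScore α S x y k * postDensity μ σ₀ α S x y =
      ∑ m, mixW μ α Sig m x * a m k := by
    intro k
    have := hm 0 1 (Pi.single k 1) 0
    simp only [zero_add, zero_dotProduct, add_zero, mul_one, single_one_dotProduct,
      mulVec_zero, dotProduct_zero] at this
    simp only [postDensity, ← mul_div_assoc]
    rw [integral_div, this, hmarg, mul_div_mul_left _ _ hκ.ne', Finset.sum_div]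
    refine Finset.sum_congr rfl fun m _ => ?_
    simp only [mixW, hg, ha]; ring
  have hsecond : ∫ y : Fin D → ℝ, proxyScore α S x y i * proxyScore α S x y j *
      postDensity μ σ₀ α S x y =
      ∑ m, mixW μ α Sig m x * (a m i * a m j + (S⁻¹ i j - Sig⁻¹ i j)) := by
    have := hm 0 0 (Pi.single i 1) (Pi.single j 1)
    simp only [zero_add, single_one_dotProduct, mulVec_single_one, Matrix.col_apply,
      Matrix.sub_apply] at this
    simp only [postDensity, ← mul_div_assoc]
    rw [integral_div, this, hmarg, mul_div_mul_left _ _ hκ.ne', Finset.sum_div]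
    refine Finset.sum_congr rfl fun m _ => ?_
    simp only [mixW, hg, ha]; ring
  have hw : ∑ m, mixW μ α Sig m x = 1 := by
    simp only [mixW]
    rw [← Finset.sum_div]
    exact div_self hGs.ne'
  obtain ⟨w, hwdef⟩ : ∃ w : Fin M → ℝ, ∀ m, w m = mixW μ α Sig m x := ⟨_, fun _ => rfl⟩
  simp only [← hwdef] at hw hfirst hsecond
  -- components
  let n : Fin M → Fin D → ℝ := fun m => Sig⁻¹ *ᵥ μ m
  let e : Fin D → ℝ := Sig⁻¹ *ᵥ x
  have hak : ∀ m k, a m k = α * n m k - e k := by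
    intro m k
    simp only [ha, n, e, mulVec_sub, mulVec_smul, Pi.sub_apply, Pi.smul_apply, smul_eq_mul]
  have hmean : ∀ k, ∑ m, w m * a m k = α * (∑ m, w m * n m k) - e k := by
    intro k
    simp only [hak, mul_sub, Finset.sum_sub_distrib, ← Finset.sum_mul, hw, one_mul]
    rw [Finset.mul_sum]
    congr 1
    exact Finset.sum_congr rfl fun m _ => by ring
  have hvv : ∀ p q : Fin D → ℝ, Sig⁻¹ * vecMulVec p q * Sig⁻¹ =
      vecMulVec (Sig⁻¹ *ᵥ p) (Sig⁻¹ *ᵥ q) := by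
    intro p q
    rw [mul_vecMulVec, vecMulVec_mul, ← mulVec_transpose, hsym]
  have hmm : ∀ k, (Sig⁻¹ *ᵥ mixMean μ α Sig x) k = ∑ m, w m * n m k := by
    intro k
    simp only [mixMean, ← hwdef, mulVec_sum, mulVec_smul, Finset.sum_apply, Pi.smul_apply,
      smul_eq_mul, n]
  have hcov : (Sig⁻¹ * mixCovMu μ α Sig x * Sig⁻¹) i j =
      (∑ m, w m * (n m i * n m j)) - (∑ m, w m * n m i) * (∑ m, w m * n m j) := by
    unfold mixCovMu
    rw [mul_sub, sub_mul, hvv, Matrix.sub_apply, vecMulVec_apply, hmm, hmm]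
    congr 1
    simp only [← hwdef, Finset.mul_sum, Finset.sum_mul, mul_smul_comm, smul_mul_assoc, hvv,
      Matrix.sum_apply, Matrix.smul_apply, vecMulVec_apply, smul_eq_mul, n]
  have hsec2 : ∑ m, w m * (a m i * a m j + (S⁻¹ i j - Sig⁻¹ i j)) =
      α ^ 2 * (∑ m, w m * (n m i * n m j)) - α * e j * (∑ m, w m * n m i)
        - α * e i * (∑ m, w m * n m j) + (e i * e j + (S⁻¹ i j - Sig⁻¹ i j)) := by
    have : e i * e j + (S⁻¹ i j - Sig⁻¹ i j) =
        ∑ m, w m * (e i * e j + (S⁻¹ i j - Sig⁻¹ i j)) := by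
      rw [← Finset.sum_mul, hw, one_mul]
    rw [this]
    simp only [Finset.mul_sum, ← Finset.sum_sub_distrib, ← Finset.sum_add_distrib]
    refine Finset.sum_congr rfl fun m _ => ?_
    rw [hak, hak]; ring
  have hL : proxyPostCov μ σ₀ α S x i j = (∑ m, w m * (a m i * a m j + (S⁻¹ i j - Sig⁻¹ i j))) -
      (∑ m, w m * a m i) * (∑ m, w m * a m j) := by
    rw [← hsecond, ← hfirst, ← hfirst]
    rfl
  rw [hL, hsec2, hmean, hmean, Matrix.smul_apply, hcov, smul_eq_mul]
  ring
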